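/- arXiv:1307.1956 — 2 statements merged into one kernel-verified Lean document; each statement's English description precedes it below -/
import Mathlib

section
/- Let K be a henselian valued field with valuation ring O, maximal ideal m, residue field F. Let f ∈ O[X] be monic such that f̄ is square-free and has no zero in F, and suppose there is a ∈ O with f'(a) ∉ m. If F is PAC, or F is finite with |F| > (2·deg(f)−1)^4, then O = (f(K)⁻¹ − f(K)⁻¹) + (f(K)⁻¹·f(K)⁻¹ ∪ {0}), i.e., every element of O is of the form f(x)⁻¹ − f(y)⁻¹ + t with t = 0 or t = f(z)⁻¹f(w)⁻¹, and conversely all such elements lie in O. -/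
/-- A field `F` is pseudo-algebraically closed (PAC) if every absolutely irreducible
affine variety over `F` has an `F`-rational point. -/
def IsPAC (F : Type*) [Field F] : Prop :=
  ∀ (n : ℕ) (I : Ideal (MvPolynomial (Fin n) F)), I.IsPrime →
    (I.map (MvPolynomial.map (algebraMap F (AlgebraicClosure F)))).IsPrime →
    ∃ x : Fin n → F, ∀ g ∈ I, MvPolynomial.eval x g = 0


theorem sum_prod_aux {F : Type*} [Field F] [Fintype F] [DecidableEq F] (A : Finset F)
    (hA : Fintype.card F ^ 3 < A.card ^ 4) (w : F) :
    ∃ a ∈ A, ∃ b ∈ A, ∃ c ∈ A, ∃ e ∈ A, w = a - b + c * e := by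
  by_contra! hcon
  set q : ℤ := (Fintype.card F : ℤ) with hq
  set N : ℤ := (A.card : ℤ) with hN
  let r : F × F → ℤ := fun s => ∑ p ∈ A ×ˢ A, if s.2 = w + p.1 - p.2 * s.1 then 1 else 0
  have hcard : ((A ×ˢ A).card : ℤ) = N ^ 2 := by simp [Finset.card_product, hN, sq]
  have h1 : ∑ s, r s = q * N ^ 2 := by
    simp only [r]
    rw [Finset.sum_comm]
    have : ∀ p ∈ A ×ˢ A, (∑ s : F × F, if s.2 = w + p.1 - p.2 * s.1 then (1:ℤ) else 0) = q := by
      intro p _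
      rw [Fintype.sum_prod_type]
      simp [hq]
    rw [Finset.sum_congr rfl this, Finset.sum_const, nsmul_eq_mul, hcard]; ring
  have h2 : ∑ s, r s ^ 2 ≤ N ^ 4 + q * N ^ 2 := by
    have e1 : ∑ s, r s ^ 2 = ∑ p ∈ A ×ˢ A, ∑ p' ∈ A ×ˢ A,
        ∑ e : F, if w + p.1 - p.2 * e = w + p'.1 - p'.2 * e then (1:ℤ) else 0 := by
      simp only [r, sq, Finset.sum_mul_sum]
      rw [Finset.sum_comm]
      refine Finset.sum_congr rfl fun p _ => ?_
      rw [Finset.sum_comm]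
      refine Finset.sum_congr rfl fun p' _ => ?_
      rw [Fintype.sum_prod_type]
      refine Finset.sum_congr rfl fun e _ => ?_
      simp [eq_comm]
    rw [e1]
    have e2 : ∀ p ∈ A ×ˢ A, ∀ p' ∈ A ×ˢ A,
        (∑ e : F, if w + p.1 - p.2 * e = w + p'.1 - p'.2 * e then (1:ℤ) else 0)
          ≤ 1 + if p = p' then q else 0 := by
      intro p _ p' _
      by_cases h : p = p'
      · subst h; simp [hq]
      · simp only [h, if_false, add_zero]
        rw [Finset.sum_boole]
        have : (Finset.univ.filter fun e => w + p.1 - p.2 * e = w + p'.1 - p'.2 * e).card ≤ 1 := by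
          rw [Finset.card_le_one]
          intro x hx y hy
          simp only [Finset.mem_filter, Finset.mem_univ, true_and] at hx hy
          have hc : p.2 ≠ p'.2 := by
            intro hc
            apply h
            rw [hc] at hx
            exact Prod.ext (by linear_combination hx) hc
          have : (p.2 - p'.2) * (x - y) = 0 := by linear_combination hy - hx
          rcases mul_eq_zero.1 this with h | h
          · exact absurd (sub_eq_zero.1 h) hc
          · exact sub_eq_zero.1 h
        exact_mod_cast this
    refine (Finset.sum_le_sum fun p hp => Finset.sum_le_sum fun p' hp' => e2 p hp p' hp').trans ?_
    have e3 : ∀ p ∈ A ×ˢ A, (∑ p' ∈ A ×ˢ A, ((1:ℤ) + if p = p' then q else 0)) = N ^ 2 + q := by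
      intro p hp
      rw [Finset.sum_add_distrib, Finset.sum_ite_eq, if_pos hp, Finset.sum_const, nsmul_eq_mul, hcard, mul_one]
    rw [Finset.sum_congr rfl e3, Finset.sum_const, nsmul_eq_mul, hcard]
    apply le_of_eq; ring
  have h3 : ∑ s : F × F, (q * r s - N ^ 2) ^ 2 = q ^ 2 * ∑ s, r s ^ 2 - 2 * q * N ^ 2 * ∑ s, r s
      + q ^ 2 * N ^ 4 := by
    have : ∀ s, (q * r s - N ^ 2) ^ 2 = q ^ 2 * r s ^ 2 - 2 * q * N ^ 2 * r s + N ^ 4 := by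
      intro s; ring
    simp only [this, Finset.sum_add_distrib, Finset.sum_sub_distrib, ← Finset.mul_sum]
    simp only [Finset.sum_const, Finset.card_univ, Fintype.card_prod, nsmul_eq_mul]
    push_cast
    rw [← hq]; ring
  have h4 : N ^ 6 ≤ ∑ s : F × F, (q * r s - N ^ 2) ^ 2 := by
    refine le_trans ?_ (Finset.sum_le_univ_sum_of_nonneg (s := A ×ˢ A) (fun s => sq_nonneg _))
    have : ∀ s ∈ A ×ˢ A, (q * r s - N ^ 2) ^ 2 = N ^ 4 := by
      intro s hs
      have : r s = 0 := by
        refine Finset.sum_eq_zero fun p hp => if_neg fun h => ?_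
        simp only [Finset.mem_product] at hs hp
        exact hcon s.2 hs.2 p.1 hp.1 p.2 hp.2 s.1 hs.1 (by rw [h]; ring)
      rw [this]; ring
    rw [Finset.sum_congr rfl this, Finset.sum_const, nsmul_eq_mul, hcard]
    apply le_of_eq; ring
  have hA' : q ^ 3 < N ^ 4 := by rw [hq, hN]; exact_mod_cast hA
  have hq0 : 0 ≤ q := by positivity
  have hN0 : 0 < N := by
    rcases (show 0 ≤ N by positivity).eq_or_lt with h | h
    · rw [← h] at hA'
      have : 0 ≤ q ^ 3 := by positivity
      norm_num at hA'; omega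
    · exact h
  have h5 := mul_le_mul_of_nonneg_left h2 (sq_nonneg q)
  have h6 := mul_lt_mul_of_pos_left hA' (pow_pos hN0 2)
  rw [h3, h1] at h4
  nlinarith

open Polynomial in
theorem finite_aux {F : Type*} [Field F] [Finite F] (f : F[X]) (hd : 2 ≤ f.natDegree)
    (hder : f.derivative ≠ 0)
    (hc : (2 * f.natDegree - 1) ^ 4 < Nat.card F) (w : F) :
    ∃ x y z v, f.derivative.eval x ≠ 0 ∧
      w = (f.eval x)⁻¹ - (f.eval y)⁻¹ + (f.eval z)⁻¹ * (f.eval v)⁻¹ := by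
  classical
  have := Fintype.ofFinite F
  rw [Nat.card_eq_fintype_card] at hc
  set d := f.natDegree with hdd
  let S : Finset F := Finset.univ.filter fun x => f.derivative.eval x ≠ 0
  have hS : Fintype.card F ≤ S.card + d := by
    have h1 := Finset.card_filter_add_card_filter_not (s := (Finset.univ : Finset F))
      (fun x => f.derivative.eval x ≠ 0)
    have h2 : (Finset.univ.filter fun x => ¬ f.derivative.eval x ≠ 0).card ≤ d := by
      refine le_trans (Finset.card_le_card (t := f.derivative.roots.toFinset) ?_) ?_
      · intro x hx
        simp at hx
        simp [hder, hx]
      · refine (Multiset.toFinset_card_le _).trans ((card_roots' _).trans ?_)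
        exact (natDegree_derivative_le f).trans (Nat.sub_le _ _)
    rw [Finset.card_univ] at h1
    have : S.card = (Finset.univ.filter fun x => f.derivative.eval x ≠ 0).card := rfl
    omega
  let A := S.image fun x => (f.eval x)⁻¹
  have hSA : S.card ≤ d * A.card := by
    apply Finset.card_le_mul_card_image
    intro b hb
    have hne : f - C b⁻¹ ≠ 0 := by
      intro h
      have := congrArg natDegree h
      rw [natDegree_sub_C] at this
      simp at this; omega
    refine le_trans (Finset.card_le_card (t := (f - C b⁻¹).roots.toFinset) ?_) ?_
    · intro x hx
      simp only [Finset.mem_filter] at hx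
      rw [Multiset.mem_toFinset, mem_roots hne]
      simp [← hx.2]
    · refine (Multiset.toFinset_card_le _).trans ((card_roots' _).trans ?_)
      rw [natDegree_sub_C]
  have hA : Fintype.card F ^ 3 < A.card ^ 4 := by
    obtain ⟨m, hm⟩ : ∃ m, d = m + 2 := ⟨d - 2, by omega⟩
    have hm' : 2 * d - 1 = 2 * m + 3 := by omega
    rw [hm'] at hc
    generalize Fintype.card F = q at *
    generalize A.card = N at *
    have g1 : 16 * d ≤ q := by
      rw [hm]
      have : 27 * (2 * m + 3) ≤ (2*m+3)^4 := by
        have : 3 ^ 3 ≤ (2 * m + 3) ^ 3 := Nat.pow_le_pow_left (by omega) 3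
        calc 27 * (2 * m + 3) ≤ (2*m+3)^3 * (2*m+3) := Nat.mul_le_mul_right _ this
          _ = _ := by ring
      omega
    have g2 : q ≤ (2 * m + 3) * N := by
      clear_value d
      subst hm
      nlinarith
    have g3 := Nat.pow_le_pow_left g2 4
    have hN : 0 < N := by
      rcases Nat.eq_zero_or_pos N with h | h
      · subst h; omega
      · exact h
    have g4 : q ^ 4 < q * N ^ 4 := by
      refine lt_of_le_of_lt g3 ?_
      rw [mul_pow]
      exact Nat.mul_lt_mul_of_pos_right hc (by positivity)
    have : q * q ^ 3 < q * N ^ 4 := by rw [← pow_succ']; exact g4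
    exact lt_of_mul_lt_mul_left this (Nat.zero_le _)
  obtain ⟨a, ha, b, hb, c, hc, e, he, h⟩ := sum_prod_aux A hA w
  simp only [A, S, Finset.mem_image, Finset.mem_filter, Finset.mem_univ, true_and] at ha hb hc he
  obtain ⟨x, hx, rfl⟩ := ha
  obtain ⟨y, hy, rfl⟩ := hb
  obtain ⟨z, hz, rfl⟩ := hc
  obtain ⟨v, hv, rfl⟩ := he
  exact ⟨x, y, z, v, hx, h⟩

open Polynomial in
theorem eisenstein_aux {R : Type*} [CommRing R] [IsDomain R] (g p c : R) (hp : Prime p)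
    (h1 : p ∣ g) (h2 : ¬ p * p ∣ g) (hc : IsUnit c) (r : R[X]) (d : ℕ) (hd : 0 < d)
    (hr0 : r.coeff 0 = 1) (hr : r.natDegree ≤ d) :
    Irreducible (C g * r - C c * X ^ d) := by
  have hcp : ¬ p ∣ c := fun h => hp.not_isUnit (isUnit_of_dvd_unit h hc)
  have co : ∀ n, (C g * r - C c * X ^ d).coeff n = g * r.coeff n - if n = d then c else 0 := by
    intro n; simp [coeff_X_pow]
  have hco : ¬ p ∣ (C g * r - C c * X ^ d).coeff d := by
    rw [co, if_pos rfl]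
    intro h
    exact hcp ((dvd_sub_right (h1.mul_right _)).1 h)
  have hle : (C g * r - C c * X ^ d).natDegree ≤ d := by
    refine (natDegree_sub_le _ _).trans (max_le ?_ ?_)
    · exact (natDegree_C_mul_le _ _).trans hr
    · exact natDegree_C_mul_X_pow_le _ _
  have hne : (C g * r - C c * X ^ d).coeff d ≠ 0 := fun h => hco (h ▸ dvd_zero p)
  have hnd : (C g * r - C c * X ^ d).natDegree = d := natDegree_eq_of_le_of_coeff_ne_zero hle hne
  have hdeg : (C g * r - C c * X ^ d).degree = (d : WithBot ℕ) := by
    rw [degree_eq_natDegree (fun h => hne (by rw [h]; simp)), hnd]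
  refine irreducible_of_eisenstein_criterion (P := Ideal.span {p})
    ((Ideal.span_singleton_prime hp.ne_zero).2 hp) ?_ ?_ ?_ ?_ ?_
  · rw [leadingCoeff, hnd, Ideal.mem_span_singleton]; exact hco
  · intro n hn
    rw [hdeg] at hn
    have hn' : n < d := by exact_mod_cast hn
    rw [co, if_neg hn'.ne, sub_zero, Ideal.mem_span_singleton]
    exact h1.mul_right _
  · rw [hdeg]; exact_mod_cast hd
  · rw [Ideal.span_singleton_pow, Ideal.mem_span_singleton, co, if_neg hd.ne, hr0, sq]
    simpa using h2
  · intro t ht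
    rw [C_dvd_iff_dvd_coeff] at ht
    have t0 := ht 0
    rw [co, if_neg hd.ne, hr0, mul_one, sub_zero] at t0
    have td := ht d
    rw [co, if_pos rfl] at td
    exact isUnit_of_dvd_unit ((dvd_sub_right (t0.mul_right _)).1 td) hc

open Polynomial in
/-- The polynomial `f(Y) r(U) - c U^d`. -/
noncomputable def curvePoly {k : Type*} [Field k] (f r : k[X]) (c : k) (d : ℕ) :
    MvPolynomial (Fin 2) k :=
  aeval (MvPolynomial.X 1) f * aeval (MvPolynomial.X 0) r - MvPolynomial.C c * MvPolynomial.X 0 ^ d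

open Polynomial in
theorem curve_irred {k : Type*} [Field k] (f r : k[X]) (c : k) (d : ℕ) (hd : 0 < d)
    (hc : c ≠ 0) (hf0 : f ≠ 0) (hfu : ¬ IsUnit f) (hsf : Squarefree f)
    (hr0 : r.coeff 0 = 1) (hr : r.natDegree ≤ d) :
    Prime (curvePoly f r c d) := by
  rw [← UniqueFactorizationMonoid.irreducible_iff_prime]
  rw [← MulEquiv.irreducible_iff (MvPolynomial.finSuccEquiv k 1)]
  obtain ⟨p, hp, hpf⟩ := WfDvdMonoid.exists_irreducible_factor hfu hf0
  have hpp := hp.prime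
  let e := (MvPolynomial.uniqueAlgEquiv k (Fin 1)).symm
  have he : ∀ q : k[X], e q = aeval (MvPolynomial.X 0) q := by
    intro q
    have : (e : k[X] →ₐ[k] MvPolynomial (Fin 1) k) = aeval (MvPolynomial.X 0) := by
      ext1
      simp [e]
    exact DFunLike.congr_fun this q
  have key : MvPolynomial.finSuccEquiv k 1 (curvePoly f r c d) =
      C (e f) * r.map (algebraMap k (MvPolynomial (Fin 1) k)) - C (MvPolynomial.C c) * X ^ d := by
    have a1 : MvPolynomial.finSuccEquiv k 1 (MvPolynomial.X 1) = C (MvPolynomial.X 0) :=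
      MvPolynomial.finSuccEquiv_X_succ (j := (0 : Fin 1))
    have a2 : MvPolynomial.finSuccEquiv k 1 (MvPolynomial.C c) = C (MvPolynomial.C c) := by
      simp [MvPolynomial.finSuccEquiv_apply]
    have a3 : (aeval (C (MvPolynomial.X 0 : MvPolynomial (Fin 1) k))) f = C (aeval (MvPolynomial.X 0) f) := by
      have := aeval_algebraMap_apply (MvPolynomial (Fin 1) k)[X] (MvPolynomial.X 0 : MvPolynomial (Fin 1) k) f
      exact this
    have a4 : (aeval (X : (MvPolynomial (Fin 1) k)[X])) r = r.map (algebraMap k (MvPolynomial (Fin 1) k)) := by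
      rw [aeval_X_left_eq_map]
    rw [curvePoly, map_sub, map_mul, map_mul, map_pow, a2, MvPolynomial.finSuccEquiv_X_zero, he]
    rw [← aeval_algHom_apply, ← aeval_algHom_apply, a1, MvPolynomial.finSuccEquiv_X_zero, a3, a4]
  rw [key]
  refine eisenstein_aux (e f) (e p) _ ((MulEquiv.prime_iff e).2 hpp) (map_dvd e hpf) ?_ ?_ _ d hd ?_ ?_
  · intro h
    rw [← map_mul, map_dvd_iff e] at h
    exact hp.not_isUnit (hsf p h)
  · exact (isUnit_iff_ne_zero.2 hc).map MvPolynomial.C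
  · simp [hr0]
  · exact natDegree_map_le.trans hr

open Polynomial in
theorem pac_aux {F : Type*} [Field F] (hF : IsPAC F) (f : F[X]) (hf : f.Monic)
    (hd : 0 < f.natDegree) (hsf : Squarefree (f.map (algebraMap F (AlgebraicClosure F))))
    (hres : ∀ z, f.eval z ≠ 0) (c : F) (hc : c ≠ 0) :
    ∃ z v, f.eval z * f.eval v = c := by
  have hsf' : Squarefree f := by
    intro a ha
    have := hsf (a.map _) (by rw [← Polynomial.map_mul]; exact Polynomial.map_dvd _ ha)
    rwa [isUnit_map] at this
  have hr0 : f.reverse.coeff 0 = 1 := by rw [coeff_zero_reverse]; exact hf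
  have hrd : f.reverse.natDegree ≤ f.natDegree := reverse_natDegree_le f
  have P1 := curve_irred f f.reverse c f.natDegree hd hc hf.ne_zero
    (fun h => by have := natDegree_eq_zero_of_isUnit h; omega) hsf' hr0 hrd
  have hm : (f.map (algebraMap F (AlgebraicClosure F))).Monic := hf.map _
  have P2 := curve_irred (f.map (algebraMap F (AlgebraicClosure F)))
    (f.reverse.map (algebraMap F (AlgebraicClosure F))) (algebraMap F (AlgebraicClosure F) c)
    f.natDegree hd (by simpa using hc) hm.ne_zero
    (fun h => by have := natDegree_eq_zero_of_isUnit h; rw [natDegree_map] at this; omega) hsf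
    (by simp [coeff_map, hr0]) (natDegree_map_le.trans hrd)
  have hmap : MvPolynomial.map (algebraMap F (AlgebraicClosure F))
      (curvePoly f f.reverse c f.natDegree) =
      curvePoly (f.map (algebraMap F (AlgebraicClosure F)))
    (f.reverse.map (algebraMap F (AlgebraicClosure F))) (algebraMap F (AlgebraicClosure F) c)
    f.natDegree := by
    have a : ∀ (i : Fin 2) (g : F[X]), MvPolynomial.map (algebraMap F (AlgebraicClosure F))
        (aeval (MvPolynomial.X i) g) = aeval (MvPolynomial.X i)
          (g.map (algebraMap F (AlgebraicClosure F))) := by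
      intro i g
      rw [aeval_def, hom_eval₂, aeval_def, eval₂_map, MvPolynomial.map_X]
      congr 1
      ext x
      simp [MvPolynomial.algebraMap_eq]
    simp [curvePoly, a]
  obtain ⟨x, hx⟩ := hF 2 (Ideal.span {curvePoly f f.reverse c f.natDegree})
    ((Ideal.span_singleton_prime P1.ne_zero).2 P1)
    (by
      rw [Ideal.map_span, Set.image_singleton, hmap]
      exact (Ideal.span_singleton_prime P2.ne_zero).2 P2)
  have hx := hx _ (Ideal.mem_span_singleton_self _)
  have a : ∀ (i : Fin 2) (g : F[X]), MvPolynomial.eval x (aeval (MvPolynomial.X i) g) =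
      g.eval (x i) := by
    intro i g
    rw [aeval_def, hom_eval₂, MvPolynomial.eval_X, eval]
    congr 1
    ext x
    simp [MvPolynomial.algebraMap_eq]
  simp only [curvePoly, map_sub, map_mul, map_pow, a, MvPolynomial.eval_X, MvPolynomial.eval_C] at hx
  have hu : x 0 ≠ 0 := by
    intro h
    rw [h, ← coeff_zero_eq_eval_zero, hr0, zero_pow hd.ne'] at hx
    exact hres (x 1) (by simpa using hx)
  let := invertibleOfNonzero (inv_ne_zero hu)
  have h := eval₂_reverse_mul_pow (RingHom.id F) (x 0)⁻¹ f
  rw [invOf_eq_inv, inv_inv, ← eval, ← eval] at h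
  refine ⟨(x 0)⁻¹, x 1, ?_⟩
  rw [← h, inv_pow]
  field_simp
  linear_combination hx

open Polynomial in
theorem hensel_aux {R : Type*} [CommRing R] [HenselianLocalRing R] (f : R[X]) (hf : f.Monic)
    (hd : 2 ≤ f.natDegree) (x i μ : R) (hx : IsUnit (f.derivative.eval x)) (hi : f.eval x * i = 1)
    (hμ : μ ∈ IsLocalRing.maximalIdeal R) : ∃ x', f.eval x' * (i + μ) = 1 := by
  have hu : IsUnit (i + μ) := by
    by_contra h
    have h' : i + μ ∈ IsLocalRing.maximalIdeal R := h
    have : i ∈ IsLocalRing.maximalIdeal R := by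
      have := sub_mem h' hμ
      rwa [add_sub_cancel_right] at this
    exact this (IsUnit.of_mul_eq_one_right _ hi)
  obtain ⟨j, hj⟩ := hu.exists_right_inv
  have hdeg : (C j).degree < f.degree := by
    refine lt_of_le_of_lt degree_C_le ?_
    rw [degree_eq_natDegree hf.ne_zero]
    exact_mod_cast (by omega : 0 < f.natDegree)
  obtain ⟨x', h1, -⟩ := HenselianLocalRing.is_henselian (f - C j) (hf.sub_of_left hdeg) x
    (by
      have : eval x (f - C j) = f.eval x * j * μ := by
        rw [eval_sub, eval_C]
        linear_combination (- f.eval x) * hj + j * hi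
      rw [this]
      exact Ideal.mul_mem_left _ _ hμ)
    (by simpa using hx)
  refine ⟨x', ?_⟩
  have : f.eval x' = j := by
    have := h1
    rw [IsRoot, eval_sub, eval_C] at this
    exact sub_eq_zero.1 this
  rw [this, mul_comm, hj]

/-- Let `K` be a henselian valued field with valuation ring `O`, maximal
ideal `m` and residue field `F`, and `f ∈ O[X]` monic whose reduction is square-free
with no zero in `F`, with some `a ∈ O` such that `f'(a) ∉ m`. If `F` is PAC, or finite
with `|F| > (2·deg f − 1)^4`, then
`O = (f(K)⁻¹ − f(K)⁻¹) + (f(K)⁻¹·f(K)⁻¹ ∪ {0})`: an element `w ∈ K` lies in `O` iff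
`w = f(x)⁻¹ − f(y)⁻¹ + t` with `t = 0` or `t = f(z)⁻¹ f(v)⁻¹`. -/
theorem statement13 (K : Type*) [Field K] (O : ValuationSubring K) [HenselianLocalRing O]
    (f : Polynomial O) (hf : f.Monic)
    (hsf : Squarefree ((f.map (IsLocalRing.residue O)).map
      (algebraMap (IsLocalRing.ResidueField O)
        (AlgebraicClosure (IsLocalRing.ResidueField O)))))
    (hres : ∀ z : IsLocalRing.ResidueField O,
      Polynomial.eval z (f.map (IsLocalRing.residue O)) ≠ 0)
    (ha : ∃ a : O, Polynomial.eval a f.derivative ∉ IsLocalRing.maximalIdeal O)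
    (hF : IsPAC (IsLocalRing.ResidueField O) ∨
      (Finite (IsLocalRing.ResidueField O) ∧
        (2 * f.natDegree - 1) ^ 4 < Nat.card (IsLocalRing.ResidueField O))) :
    ∀ w : K, w ∈ O ↔ ∃ x y : K,
      w = (Polynomial.eval x (f.map O.subtype))⁻¹ -
          (Polynomial.eval y (f.map O.subtype))⁻¹ ∨
      ∃ z v : K, w = (Polynomial.eval x (f.map O.subtype))⁻¹ -
          (Polynomial.eval y (f.map O.subtype))⁻¹ +
          (Polynomial.eval z (f.map O.subtype))⁻¹ *
          (Polynomial.eval v (f.map O.subtype))⁻¹ := by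
  classical
  have hunit : ∀ x : O, IsUnit (f.eval x) := by
    intro x
    by_contra h
    apply hres (IsLocalRing.residue O x)
    rw [Polynomial.eval_map_apply, IsLocalRing.residue_eq_zero_iff]
    exact h
  have hcoe : ∀ x : O, Polynomial.eval (x : K) (f.map O.subtype) = ((f.eval x : O) : K) := by
    intro x
    exact Polynomial.eval_map_apply O.subtype x
  have hinv : ∀ x i : O, f.eval x * i = 1 →
      (Polynomial.eval (x : K) (f.map O.subtype))⁻¹ = (i : K) := by
    intro x i h
    rw [hcoe]
    apply inv_eq_of_mul_eq_one_right
    exact_mod_cast congrArg (Subtype.val) h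
  have hinvF : ∀ x i : O, f.eval x * i = 1 →
      IsLocalRing.residue O i =
        (Polynomial.eval (IsLocalRing.residue O x) (f.map (IsLocalRing.residue O)))⁻¹ := by
    intro x i h
    symm
    rw [Polynomial.eval_map_apply]
    apply inv_eq_of_mul_eq_one_right
    rw [← map_mul, h, map_one]
  obtain ⟨a, ha⟩ := ha
  have haF : Polynomial.eval (IsLocalRing.residue O a)
      (f.map (IsLocalRing.residue O)).derivative ≠ 0 := by
    rw [Polynomial.derivative_map, Polynomial.eval_map_apply, Ne, IsLocalRing.residue_eq_zero_iff]
    exact ha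
  have hderiv : (f.map (IsLocalRing.residue O)).derivative ≠ 0 := by
    intro h; rw [h] at haF; simp at haF
  have hnd : (f.map (IsLocalRing.residue O)).natDegree = f.natDegree := hf.natDegree_map _
  have hd : 2 ≤ f.natDegree := by
    by_contra h
    have h' : f.natDegree = 0 ∨ f.natDegree = 1 := by omega
    rcases h' with h' | h'
    · rw [hf.natDegree_eq_zero.1 h'] at ha
      simp at ha
    · obtain ⟨z, hz⟩ := Polynomial.exists_root_of_degree_eq_one
        (p := f.map (IsLocalRing.residue O))
        (by rw [Polynomial.degree_eq_natDegree (hf.map _).ne_zero, hnd, h']; rfl)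
      exact hres z hz
  have hmem : ∀ x : K, (Polynomial.eval x (f.map O.subtype))⁻¹ ∈ O := by
    intro x
    rcases O.mem_or_inv_mem (Polynomial.eval x (f.map O.subtype)) with h | h
    · have hx : IsIntegral O x := by
        refine ⟨f - Polynomial.C ⟨_, h⟩, hf.sub_of_left ?_, ?_⟩
        · refine lt_of_le_of_lt Polynomial.degree_C_le ?_
          rw [Polynomial.degree_eq_natDegree hf.ne_zero]
          exact_mod_cast (by omega : 0 < f.natDegree)
        · rw [Polynomial.eval₂_sub, Polynomial.eval₂_C, ← Polynomial.eval_map]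
          exact sub_self _
      obtain ⟨y, hy⟩ := IsIntegrallyClosed.isIntegral_iff.1 hx
      obtain ⟨i, hi⟩ := (hunit y).exists_right_inv
      have := hinv y i hi
      rw [← hy, show algebraMap O K y = (y : K) from rfl, this]
      exact i.2
    · exact h
  intro w
  constructor
  swap
  · rintro ⟨x, y, h | ⟨z, v, h⟩⟩
    · rw [h]; exact sub_mem (hmem x) (hmem y)
    · rw [h]; exact add_mem (sub_mem (hmem x) (hmem y)) (mul_mem (hmem z) (hmem v))
  intro hw
  obtain ⟨w, rfl⟩ : ∃ w' : O, (w' : K) = w := ⟨⟨w, hw⟩, rfl⟩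
  have lift : ∀ x y t : O, Polynomial.eval (IsLocalRing.residue O x)
        (f.map (IsLocalRing.residue O)).derivative ≠ 0 →
      IsLocalRing.residue O w =
        (Polynomial.eval (IsLocalRing.residue O x) (f.map (IsLocalRing.residue O)))⁻¹ -
        (Polynomial.eval (IsLocalRing.residue O y) (f.map (IsLocalRing.residue O)))⁻¹ +
        IsLocalRing.residue O t →
      ∃ x' : O, (w : K) = (Polynomial.eval (x' : K) (f.map O.subtype))⁻¹ -
          (Polynomial.eval (y : K) (f.map O.subtype))⁻¹ + (t : K) := by
    intro x y t hx hwt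
    obtain ⟨i, hi⟩ := (hunit x).exists_right_inv
    obtain ⟨j, hj⟩ := (hunit y).exists_right_inv
    rw [← hinvF x i hi, ← hinvF y j hj] at hwt
    have hμ : w - (i - j + t) ∈ IsLocalRing.maximalIdeal O := by
      rw [← IsLocalRing.residue_eq_zero_iff]
      simp [hwt]
    have hxu : IsUnit (f.derivative.eval x) := by
      by_contra h
      apply hx
      rw [Polynomial.derivative_map, Polynomial.eval_map_apply, IsLocalRing.residue_eq_zero_iff]
      exact h
    obtain ⟨x', hx'⟩ := hensel_aux f hf hd x i _ hxu hi hμ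
    refine ⟨x', ?_⟩
    rw [hinv x' _ hx', hinv y j hj]
    push_cast
    ring
  have hsurj : Function.Surjective (IsLocalRing.residue O) := IsLocalRing.residue_surjective
  have lift2 : ∀ x y z v : IsLocalRing.ResidueField O,
      Polynomial.eval x (f.map (IsLocalRing.residue O)).derivative ≠ 0 →
      IsLocalRing.residue O w =
        (Polynomial.eval x (f.map (IsLocalRing.residue O)))⁻¹ -
        (Polynomial.eval y (f.map (IsLocalRing.residue O)))⁻¹ +
        (Polynomial.eval z (f.map (IsLocalRing.residue O)))⁻¹ *
        (Polynomial.eval v (f.map (IsLocalRing.residue O)))⁻¹ →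
      ∃ x y z v : K, (w : K) = (Polynomial.eval x (f.map O.subtype))⁻¹ -
          (Polynomial.eval y (f.map O.subtype))⁻¹ +
          (Polynomial.eval z (f.map O.subtype))⁻¹ *
          (Polynomial.eval v (f.map O.subtype))⁻¹ := by
    intro x y z v hx h
    obtain ⟨x, rfl⟩ := hsurj x
    obtain ⟨y, rfl⟩ := hsurj y
    obtain ⟨z, rfl⟩ := hsurj z
    obtain ⟨v, rfl⟩ := hsurj v
    obtain ⟨k, hk⟩ := (hunit z).exists_right_inv
    obtain ⟨l, hl⟩ := (hunit v).exists_right_inv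
    obtain ⟨x', hx'⟩ := lift x y (k * l) hx
      (by rw [h, map_mul, hinvF z k hk, hinvF v l hl])
    refine ⟨x', y, z, v, ?_⟩
    rw [hx', hinv z k hk, hinv v l hl]
    push_cast
    ring
  rcases hF with hF | ⟨hfin, hcard⟩
  · by_cases hw0 : IsLocalRing.residue O w = 0
    · obtain ⟨x', hx'⟩ := lift a a 0 haF (by simp [hw0])
      exact ⟨x', a, Or.inl (by simpa using hx')⟩
    · obtain ⟨z, v, h⟩ := pac_aux hF (f.map (IsLocalRing.residue O)) (hf.map _)
        (by rw [hnd]; omega) hsf hres (IsLocalRing.residue O w)⁻¹ (inv_ne_zero hw0)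
      obtain ⟨x, y, z, v, h⟩ := lift2 (IsLocalRing.residue O a) (IsLocalRing.residue O a) z v haF
        (by rw [← mul_inv, h]; simp)
      exact ⟨x, y, Or.inr ⟨z, v, h⟩⟩
  · obtain ⟨x, y, z, v, hx, h⟩ := finite_aux (f.map (IsLocalRing.residue O)) (by rw [hnd]; exact hd)
      hderiv (by rw [hnd]; exact hcard) (IsLocalRing.residue O w)
    obtain ⟨x, y, z, v, h⟩ := lift2 x y z v hx h
    exact ⟨x, y, Or.inr ⟨z, v, h⟩⟩
end

section
/- Let K be a henselian valued field with valuation ring O and residue field F. If F is pseudo-algebraically closed and the relative algebraic closure of the prime field in F is not algebraically closed, then O is definable in K by an existential formula in the language of rings without parameters. -/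
open FirstOrder Language

attribute [local instance] FirstOrder.Ring.compatibleRingOfRing

section PACpart

open Polynomial Polynomial.Bivariate

theorem equivMv_map {F L : Type*} [Field F] [Field L] (φ : F →+* L) (G : F[X][Y]) :
    MvPolynomial.map φ (equivMvPolynomial F G) =
      equivMvPolynomial L (G.map (mapRingHom φ)) := by
  have h : (MvPolynomial.map φ).comp (equivMvPolynomial F).toRingHom =
      (equivMvPolynomial L).toRingHom.comp (mapRingHom (mapRingHom φ)) := by
    ext <;> simp
  exact congrArg (fun g => g G) h

theorem eval_equivMv {F : Type*} [Field F] (G : F[X][Y]) (v : Fin 2 → F) :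
    MvPolynomial.eval v (equivMvPolynomial F G) = G.evalEval (v 0) (v 1) := by
  have h : (MvPolynomial.eval v).comp (equivMvPolynomial F).toRingHom =
      evalEvalRingHom (v 0) (v 1) := by
    ext <;> simp
  exact congrArg (fun g => g G) h

/-- A plane curve whose equation is absolutely irreducible has a rational point. -/
theorem pac_curve {F : Type*} [Field F] (hF : IsPAC F) (G : F[X][Y])
    (hG : Irreducible (G.map (mapRingHom (algebraMap F (AlgebraicClosure F))))) :
    ∃ x y : F, G.evalEval x y = 0 := by
  set φ := algebraMap F (AlgebraicClosure F)
  set g := equivMvPolynomial F G with hg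
  have hirr : Irreducible (MvPolynomial.map φ g) := by
    rw [hg, equivMv_map]
    exact (MulEquiv.irreducible_iff (equivMvPolynomial (AlgebraicClosure F))).2 hG
  have hloc : IsLocalHom (MvPolynomial.map φ : MvPolynomial (Fin 2) F →+* _) := by
    constructor
    intro a ha
    rw [MvPolynomial.isUnit_iff] at ha ⊢
    simp only [MvPolynomial.coeff_map, isUnit_iff_ne_zero, isNilpotent_iff_eq_zero] at ha ⊢
    refine ⟨fun h => ha.1 (by rw [h, map_zero]), fun i hi => ?_⟩
    exact (map_eq_zero φ).1 (ha.2 i hi)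
  have hirr' : Irreducible g := Irreducible.of_map (f := MvPolynomial.map φ) hirr
  have hp1 : (Ideal.span {g}).IsPrime :=
    (Ideal.span_singleton_prime hirr'.ne_zero).2 hirr'.prime
  have hp2 : ((Ideal.span {g}).map (MvPolynomial.map φ)).IsPrime := by
    rw [Ideal.map_span, Set.image_singleton]
    exact (Ideal.span_singleton_prime hirr.ne_zero).2 hirr.prime
  obtain ⟨v, hv⟩ := hF 2 _ hp1 hp2
  refine ⟨v 0, v 1, ?_⟩
  rw [← eval_equivMv]
  exact hv _ (Ideal.mem_span_singleton_self _)

theorem pac_infinite {F : Type*} [Field F] (hF : IsPAC F) : Infinite F := by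
  by_contra hfin
  rw [not_infinite_iff_finite] at hfin
  have := Fintype.ofFinite F
  let P : F[X] := X ^ Fintype.card F - X
  have hP : P ≠ 0 := FiniteField.X_pow_card_sub_X_ne_zero F Fintype.one_lt_card
  obtain ⟨x, y, h⟩ := pac_curve hF (C P * X + C (-1)) (by
    simp only [Polynomial.map_add, Polynomial.map_mul, map_C, map_X]
    apply irreducible_C_mul_X_add_C
    · simpa [← map_sub] using
        (Polynomial.map_ne_zero (f := algebraMap F (AlgebraicClosure F)) hP)
    · apply IsUnit.isRelPrime_right
      simp)
  simp [P, evalEval_add, evalEval_mul, evalEval_C, FiniteField.pow_card] at h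

/-- Eisenstein-type irreducibility criterion. -/
theorem irred_aux {L : Type*} [Field L] (f q : L[X]) (n : ℕ) (hn : 0 < n)
    (hf : f.Monic) (hdeg : f.natDegree = n) (hf0 : f.eval 0 ≠ 0) (c r : L)
    (hq : q = C c * f + X ^ n) (hr : q.eval r = 0) (hr' : q.derivative.eval r ≠ 0) :
    Irreducible (C f * X ^ n - C q * f.map C : L[X][Y]) := by
  have hfr : f.eval r ≠ 0 := by
    intro h
    have h2 : r ^ n = 0 := by
      simpa [hq, h] using hr
    have : r = 0 := by simpa [hn.ne'] using h2
    exact hf0 (this ▸ h)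
  set G : L[X][Y] := C f * X ^ n - C q * f.map C with hG
  have hcoeff : ∀ i, i ≠ n → G.coeff i = - (q * C (f.coeff i)) := by
    intro i hi
    simp [hG, coeff_X_pow, hi]
  have hcoeffn : G.coeff n = f - q := by
    have : f.coeff n = 1 := by rw [← hdeg]; exact hf
    simp [hG, this]
  have hne : (f - q).eval r ≠ 0 := by simpa [hr] using hfr
  have hnat : G.natDegree = n := by
    apply natDegree_eq_of_le_of_coeff_ne_zero
    · rw [natDegree_le_iff_coeff_eq_zero]
      intro i hi
      rw [hcoeff i hi.ne', coeff_eq_zero_of_natDegree_lt (hdeg ▸ hi)]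
      simp
    · rw [hcoeffn]
      intro h
      simp [h] at hne
  have hG0 : G ≠ 0 := by
    intro h
    rw [h] at hnat
    simp at hnat
    omega
  have hdvd : ∀ p : L[X], p ∈ Ideal.span {X - C r} ↔ p.eval r = 0 := by
    intro p
    rw [Ideal.mem_span_singleton, dvd_iff_isRoot, IsRoot]
  refine irreducible_of_eisenstein_criterion (P := Ideal.span {X - C r}) ?_ ?_ ?_ ?_ ?_ ?_
  · exact (Ideal.span_singleton_prime (X_sub_C_ne_zero r)).2 (prime_X_sub_C r)
  · rw [leadingCoeff, hnat, hcoeffn, hdvd]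
    exact hne
  · intro i hi
    rw [degree_eq_natDegree hG0, hnat, Nat.cast_lt] at hi
    rw [hcoeff i hi.ne, hdvd]
    simp [hr]
  · rw [degree_eq_natDegree hG0, hnat]
    exact_mod_cast hn
  · rw [hcoeff 0 hn.ne, Ideal.span_singleton_pow, Ideal.mem_span_singleton]
    rintro ⟨w, hw⟩
    apply hr'
    have h3 := congrArg (fun p => (derivative p).eval r) hw
    simp [derivative_pow] at h3
    rcases h3 with h3 | h3
    · exact h3
    · exact absurd (by rwa [coeff_zero_eq_eval_zero] at h3) hf0
  · intro d hd
    rw [C_dvd_iff_dvd_coeff] at hd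
    have h1 : d ∣ q := by
      have := hd 0
      rw [hcoeff 0 hn.ne, dvd_neg] at this
      refine (IsUnit.dvd_mul_right ?_).1 this
      rw [isUnit_C, coeff_zero_eq_eval_zero]
      exact hf0.isUnit
    have h2 : d ∣ f := by
      have := hd n
      rw [hcoeffn] at this
      exact (dvd_sub_left h1).1 this
    have h3 : d ∣ X ^ n := by
      rw [hq] at h1
      exact (dvd_add_right (Dvd.dvd.mul_left h2 _)).1 h1
    have hcop : IsCoprime (X ^ n) f := by
      apply IsCoprime.pow_left
      rw [(irreducible_X).coprime_iff_not_dvd, X_dvd_iff, coeff_zero_eq_eval_zero]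
      exact hf0
    exact hcop.isUnit_of_dvd' h3 h2

/-- The set of bad values is finite. -/
theorem exists_bad {F : Type*} [Field F] (hF : IsPAC F) (f : F[X]) (n : ℕ) (hn : 0 < n)
    (hf : f.Monic) (hdeg : f.natDegree = n) (hroot : ∀ x, f.eval x ≠ 0)
    (hD : X * derivative f - C (n : F) * f ≠ 0) :
    ∃ B : Set F, B.Finite ∧ ∀ c, c ∉ B →
      ∃ x z : F, c = z ^ n / f.eval z - x ^ n / f.eval x := by
  classical
  set L := AlgebraicClosure F
  set φ := algebraMap F L with hφ
  set D := X * derivative f - C (n : F) * f with hDdef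
  let R : Set L := {r | (D.map φ * X).IsRoot r}
  have hR : R.Finite := finite_setOfPred_isRoot (mul_ne_zero
    ((Polynomial.map_ne_zero_iff φ.injective).2 hD) X_ne_zero)
  let B' : Set L := insert (-1) ((fun r => - r ^ n / (f.map φ).eval r) '' R)
  have hB' : B'.Finite := (hR.image _).insert _
  refine ⟨φ ⁻¹' B', hB'.preimage φ.injective.injOn, ?_⟩
  intro c hc
  set q : L[X] := C (φ c) * f.map φ + X ^ n with hq
  have hc1 : φ c + 1 ≠ 0 := by
    intro h
    exact hc (Or.inl (eq_neg_of_add_eq_zero_left h))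
  have hmonic := hf.map φ
  have hdeg' : (f.map φ).natDegree = n := by rw [natDegree_map, hdeg]
  have hcn : (f.map φ).coeff n = 1 := by rw [← hdeg']; exact hmonic
  have hf0 : (f.map φ).eval 0 ≠ 0 := by
    rw [← map_zero φ, eval_map_apply, map_zero]
    exact (_root_.map_ne_zero φ).2 (hroot 0)
  have hqn : q.coeff n ≠ 0 := by
    simpa [hq, hcn] using hc1
  obtain ⟨r, hr⟩ : ∃ r, q.IsRoot r := by
    apply IsAlgClosed.exists_root
    intro h
    have : n ≤ q.natDegree := le_natDegree_of_ne_zero hqn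
    rw [natDegree_eq_zero_iff_degree_le_zero.2 h.le] at this
    omega
  have hr1 : q.eval r = 0 := hr
  have hr2 : φ c * (f.map φ).eval r + r ^ n = 0 := by simpa [hq] using hr1
  have hfr : (f.map φ).eval r ≠ 0 := by
    intro h
    have h2 : r ^ n = 0 := by
      simpa [h] using hr2
    have : r = 0 := by simpa [hn.ne'] using h2
    exact hf0 (this ▸ h)
  have hr' : q.derivative.eval r ≠ 0 := by
    intro h
    apply hc
    refine Or.inr ⟨r, ?_, ?_⟩
    · show (D.map φ * X).eval r = 0
      have h4 : φ c * (derivative (f.map φ)).eval r + n * r ^ (n - 1) = 0 := by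
        simpa [hq, derivative_X_pow] using h
      obtain ⟨m, rfl⟩ : ∃ m, n = m + 1 := ⟨n - 1, by omega⟩
      simp only [Nat.add_sub_cancel] at h4
      by_cases hr0 : r = 0
      · simp [hr0]
      have hc0 : φ c ≠ 0 := by
        intro h0
        simp [h0, hr0] at hr2
      have e : (D.map φ).eval r = r * (derivative (f.map φ)).eval r
          - ((m + 1 : ℕ) : L) * (f.map φ).eval r := by
        simp [hDdef, derivative_map]
      have : φ c * (D.map φ).eval r = 0 := by
        rw [e]
        linear_combination r * h4 - ((m + 1 : ℕ) : L) * hr2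
      rw [eval_mul, (mul_eq_zero.1 this).resolve_left hc0, zero_mul]
    · show -r ^ n / _ = φ c
      rw [div_eq_iff hfr]
      linear_combination -hr2
  have hirr := irred_aux (f.map φ) q n hn hmonic hdeg' hf0 (φ c) r hq hr1 hr'
  have hcomp : (mapRingHom φ).comp C = (C : L →+* L[X]).comp φ := by
    ext1 a
    simp
  obtain ⟨x, z, h⟩ := pac_curve hF (C f * X ^ n - C (C c * f + X ^ n) * f.map C) (by
    have e : (C f * X ^ n - C (C c * f + X ^ n) * f.map C : F[X][Y]).map (mapRingHom φ) =
        C (f.map φ) * X ^ n - C q * (f.map φ).map C := by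
      rw [Polynomial.map_map, ← hcomp, ← Polynomial.map_map]
      simp only [hq, Polynomial.map_sub, Polynomial.map_mul, Polynomial.map_pow, map_X, map_C,
        coe_mapRingHom, Polynomial.map_add]
    rw [← hφ, e]
    exact hirr)
  refine ⟨x, z, ?_⟩
  have hx := hroot x
  have hz := hroot z
  simp only [evalEval_sub, evalEval_mul, evalEval_C, evalEval_pow, evalEval_X,
    evalEval_map_C, eval_add, eval_mul, eval_C, eval_pow, eval_X] at h
  field_simp
  linear_combination -h

end PACpart

section PolyPart

open Polynomial

theorem perfect_bot (F : Type*) [Field F] : PerfectField (⊥ : Subfield F) := by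
  rcases CharP.exists F with ⟨p, hp⟩
  rcases CharP.char_is_prime_or_zero F p with h | h
  · have : Fact p.Prime := ⟨h⟩
    have := Subfield.fintypeBot F p
    infer_instance
  · subst h
    have := CharP.charP_to_charZero F
    infer_instance

theorem exists_poly_aux (F : Type*) [Field F] (k : Subfield F) [PerfectField k]
    (halg : ¬ IsAlgClosed (algebraicClosure k F)) :
    ∃ f : k[X], f.Monic ∧ 0 < f.natDegree ∧ f.Separable ∧ ∀ x : F, aeval x f ≠ 0 := by
  set A := algebraicClosure k F
  have : ¬ ∀ p : A[X], p.Monic → Irreducible p → ∃ x, p.eval x = 0 :=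
    fun h => halg (IsAlgClosed.of_exists_root _ h)
  push Not at this
  obtain ⟨p, -, hirr, hp⟩ := this
  let Ω := AlgebraicClosure A
  obtain ⟨α, hα⟩ := IsAlgClosed.exists_aeval_eq_zero Ω p (degree_pos_of_irreducible hirr).ne'
  have : Algebra.IsAlgebraic k Ω := Algebra.IsAlgebraic.trans k A Ω
  have hint : IsIntegral k α := Algebra.IsIntegral.isIntegral α
  have : FiniteDimensional k (IntermediateField.adjoin k {α}) :=
    IntermediateField.adjoin.finiteDimensional hint
  let N := IntermediateField.normalClosure k (IntermediateField.adjoin k {α}) Ω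
  have : Normal k N := inferInstance
  have : FiniteDimensional k N := inferInstance
  have hαN : α ∈ N := by
    have : IntermediateField.adjoin k {α} ≤ N := IntermediateField.le_normalClosure _
    exact this (IntermediateField.mem_adjoin_simple_self k α)
  let pb := Field.powerBasisOfFiniteOfSeparable k N
  have hi : IsIntegral k pb.gen := Algebra.IsIntegral.isIntegral _
  refine ⟨minpoly k pb.gen, minpoly.monic hi, minpoly.natDegree_pos hi,
    PerfectField.separable_of_irreducible (minpoly.irreducible hi), ?_⟩
  intro x hx
  have hxA : x ∈ A := by
    rw [mem_algebraicClosure_iff]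
    exact ⟨_, minpoly.ne_zero hi, hx⟩
  have hxa : aeval (⟨x, hxA⟩ : A) (minpoly k pb.gen) = 0 := by
    apply (algebraMap A F).injective
    rw [map_zero, ← aeval_algebraMap_apply]
    exact hx
  let σ : N →ₐ[k] A := pb.lift ⟨x, hxA⟩ hxa
  let τ : N →ₐ[k] Ω := (IsScalarTower.toAlgHom k A Ω).comp σ
  have hτ : τ.fieldRange = N := AlgHom.fieldRange_of_normal τ
  rw [← hτ] at hαN
  obtain ⟨y, hy⟩ := hαN
  have hy' : algebraMap A Ω (σ y) = α := hy
  apply hp (σ y)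
  apply (algebraMap A Ω).injective
  rw [map_zero, ← hα, ← hy', ← aeval_algebraMap_apply_eq_algebraMap_eval]

theorem bot_frac (F : Type*) [Field F] (x : (⊥ : Subfield F)) :
    ∃ a b : ℤ, (b : (⊥ : Subfield F)) ≠ 0 ∧ (b : (⊥ : Subfield F)) * x = a := by
  obtain ⟨x, hx⟩ := x
  rw [← Subfield.closure_empty, Subfield.mem_closure_iff] at hx
  simp only [Subring.closure_empty] at hx
  obtain ⟨_, ⟨a, rfl⟩, _, ⟨b, rfl⟩, h⟩ := hx
  by_cases hb : (b : F) = 0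
  · refine ⟨0, 1, by simp, ?_⟩
    ext
    simp [← h, hb]
  · refine ⟨a, b, ?_, ?_⟩
    · intro h0
      apply hb
      have := congrArg Subtype.val h0
      simpa using this
    · ext
      simp [← h]
      field_simp

theorem exists_denom (F : Type*) [Field F] (f : (⊥ : Subfield F)[X]) (s : Finset ℕ) :
    ∃ d : ℤ, (d : (⊥ : Subfield F)) ≠ 0 ∧ ∀ i ∈ s, ∃ a : ℤ, (a : (⊥ : Subfield F)) = d * f.coeff i := by
  classical
  induction s using Finset.induction_on with
  | empty => exact ⟨1, by simp, by simp⟩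
  | insert j s _ ih =>
    obtain ⟨d, hd, h⟩ := ih
    obtain ⟨a, b, hb, hab⟩ := bot_frac F (f.coeff j)
    refine ⟨d * b, by push_cast; exact mul_ne_zero hd hb, ?_⟩
    intro i hi
    rcases Finset.mem_insert.1 hi with rfl | hi
    · exact ⟨d * a, by push_cast; rw [← hab]; ring⟩
    · obtain ⟨a', ha'⟩ := h i hi
      exact ⟨b * a', by push_cast; rw [ha']; ring⟩

theorem coeff_X_mul_derivative {R : Type*} [CommRing R] (p : R[X]) (i : ℕ) :
    (X * derivative p).coeff i = i * p.coeff i := by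
  cases i with
  | zero => simp
  | succ j => rw [coeff_X_mul, coeff_derivative]; push_cast; ring

theorem exists_poly (F : Type*) [Field F]
    (halg : ¬ IsAlgClosed (algebraicClosure (⊥ : Subfield F) F)) :
    ∃ f : ℤ[X], f.Monic ∧ 0 < f.natDegree ∧
      (∀ x : F, (f.map (Int.castRingHom F)).eval x ≠ 0) ∧
      X * derivative (f.map (Int.castRingHom F))
        - C (f.natDegree : F) * f.map (Int.castRingHom F) ≠ 0 := by
  have := perfect_bot F
  set k := (⊥ : Subfield F)
  obtain ⟨f₀, hm, hn, hsep, hroot⟩ := exists_poly_aux F k halg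
  obtain ⟨d, hd, hden⟩ := exists_denom F f₀ (Finset.range f₀.natDegree)
  set g := f₀.scaleRoots (d : k) with hg
  have hgm : g.Monic := (monic_scaleRoots_iff _).2 hm
  have hlift : g ∈ lifts (Int.castRingHom k) := by
    rw [lifts_iff_coeff_lifts]
    intro i
    rcases lt_trichotomy i f₀.natDegree with h | h | h
    · obtain ⟨a, ha⟩ := hden i (Finset.mem_range.2 h)
      refine ⟨a * d ^ (f₀.natDegree - i - 1), ?_⟩
      obtain ⟨m, hm⟩ : ∃ m, f₀.natDegree - i = m + 1 := ⟨f₀.natDegree - i - 1, by omega⟩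
      rw [hg, coeff_scaleRoots, hm]
      simp [ha]
      ring
    · refine ⟨1, ?_⟩
      rw [hg, coeff_scaleRoots, h, coeff_natDegree, hm.leadingCoeff]
      simp
    · refine ⟨0, ?_⟩
      rw [hg, coeff_scaleRoots, coeff_eq_zero_of_natDegree_lt h]
      simp
  obtain ⟨f, hfg, hfd, hfm⟩ := lifts_and_natDegree_eq_and_monic hlift hgm
  have hnd : f.natDegree = f₀.natDegree := by rw [hfd, hg, natDegree_scaleRoots]
  have hFg : f.map (Int.castRingHom F) = g.map (algebraMap k F) := by
    rw [← hfg, Polynomial.map_map]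
    congr 1
  have hdF : algebraMap k F d ≠ 0 := (_root_.map_ne_zero _).2 hd
  refine ⟨f, hfm, hnd ▸ hn, ?_, ?_⟩
  · intro x hx
    rw [hFg, hg, eval_map_algebraMap] at hx
    apply hroot (x / algebraMap k F d)
    have e := scaleRoots_eval₂_mul (p := f₀) (algebraMap k F) (x / algebraMap k F d) (d : k)
    rw [mul_div_cancel₀ _ hdF, ← aeval_def, hx, ← aeval_def] at e
    exact (mul_eq_zero.1 e.symm).resolve_left (pow_ne_zero _ hdF)
  · rw [hFg, hnd]
    intro h0
    have hk : X * derivative f₀ - C (f₀.natDegree : k) * f₀ = 0 := by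
      ext1 i
      have := congrArg (fun p => p.coeff i) h0
      simp only [coeff_sub, coeff_X_mul_derivative, coeff_C_mul, coeff_map, coeff_zero,
        hg, coeff_scaleRoots, map_mul, map_pow] at this ⊢
      apply (algebraMap k F).injective
      have h2 := pow_ne_zero (f₀.natDegree - i) hdF
      apply mul_right_cancel₀ h2
      simp only [map_sub, map_mul, map_natCast, map_zero, zero_mul]
      linear_combination this
    have h1 := congrArg (eval 0) hk
    simp at h1
    rcases h1 with h1 | h1
    · rw [h1] at hk
      simp at hk
      rw [separable_def, hk, isCoprime_zero_right] at hsep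
      exact hn.ne' (natDegree_eq_zero_of_isUnit hsep)
    · apply hroot 0
      rw [← coeff_zero_eq_eval_zero] at h1
      rw [← coeff_zero_eq_aeval_zero', h1, map_zero]

end PolyPart

section ValPart

open Polynomial IsLocalRing

variable {K : Type*} [Field K] (O : ValuationSubring K) (f : ℤ[X])

theorem residue_aeval (z : O) : residue O (aeval z f) =
    (f.map (Int.castRingHom (ResidueField O))).eval (residue O z) := by
  rw [eval_map, aeval_def, hom_eval₂]
  congr 1

theorem coe_aeval (z : O) : ((aeval z f : O) : K) = aeval (z : K) f := by
  have : ((aeval z f : O) : K) = O.subtype (aeval z f) := rfl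
  rw [this, aeval_def, hom_eval₂, aeval_def]
  congr 1

theorem mem_of_mul_unit (s : K) (u v : O) (hu : IsUnit u) (h : s * u = v) : s ∈ O := by
  obtain ⟨u, rfl⟩ := hu
  have hu1 : ((u : O) : K) * ((u⁻¹ : Oˣ) : O) = 1 := by
    have := congrArg (fun x : O => (x : K)) (u.mul_inv)
    exact this
  have : s = ((v * ((u⁻¹ : Oˣ) : O) : O) : K) := by
    push_cast
    rw [← h]
    linear_combination (-s) * hu1
  rw [this]
  exact (v * ((u⁻¹ : Oˣ) : O)).2

theorem mem_of_eq (hm : f.Monic)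
    (hroot : ∀ x, (f.map (Int.castRingHom (ResidueField O))).eval x ≠ 0)
    (s z : K) (h : s * aeval z f = z ^ f.natDegree) : s ∈ O := by
  by_cases hz : z ∈ O
  · refine mem_of_mul_unit O s (aeval (⟨z, hz⟩ : O) f) (⟨z, hz⟩ ^ f.natDegree) ?_ ?_
    · rw [← residue_ne_zero_iff_isUnit, residue_aeval]
      exact hroot _
    · rw [coe_aeval]
      exact h
  · have hz0 : z ≠ 0 := by
      rintro rfl
      exact hz O.zero_mem
    have hw : z⁻¹ ∈ O := (O.mem_or_inv_mem z).resolve_left hz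
    have hwm : residue O ⟨z⁻¹, hw⟩ = 0 := by
      by_contra hne
      rw [← ne_eq, residue_ne_zero_iff_isUnit] at hne
      apply hz
      refine mem_of_mul_unit O z ⟨z⁻¹, hw⟩ 1 hne ?_
      simp [hz0]
    refine mem_of_mul_unit O s (aeval (⟨z⁻¹, hw⟩ : O) f.reverse) 1 ?_ ?_
    · rw [← residue_ne_zero_iff_isUnit, residue_aeval, hwm, ← coeff_zero_eq_eval_zero, coeff_map,
        coeff_zero_reverse, hm.leadingCoeff]
      simp
    · rw [coe_aeval]
      let _ := invertibleOfNonzero hz0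
      have e := eval₂_reverse_mul_pow (algebraMap ℤ K) z f
      rw [invOf_eq_inv, ← aeval_def, ← aeval_def] at e
      have hzn := pow_ne_zero f.natDegree hz0
      apply mul_right_cancel₀ hzn
      simp only [OneMemClass.coe_one, one_mul]
      rw [mul_assoc, e, h]

theorem exists_lift_val
    (hroot : ∀ x, (f.map (Int.castRingHom (ResidueField O))).eval x ≠ 0) (y : ResidueField O) :
    ∃ s z : O, residue O z = y ∧ s * aeval z f = z ^ f.natDegree ∧
      residue O s = y ^ f.natDegree / (f.map (Int.castRingHom (ResidueField O))).eval y := by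
  obtain ⟨z, rfl⟩ := residue_surjective y
  have hu : IsUnit (aeval z f) := by
    rw [← residue_ne_zero_iff_isUnit, residue_aeval]
    exact hroot _
  obtain ⟨u, hu⟩ := hu
  have e : z ^ f.natDegree * ((u⁻¹ : Oˣ) : O) * aeval z f = z ^ f.natDegree := by
    rw [← hu, mul_assoc, Units.inv_mul, mul_one]
  refine ⟨z ^ f.natDegree * ((u⁻¹ : Oˣ) : O), z, rfl, e, ?_⟩
  rw [eq_div_iff (hroot _), ← residue_aeval, ← map_mul, e, map_pow]

theorem hensel_part [HenselianLocalRing O] [Infinite (ResidueField O)] (hm : f.Monic)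
    (hn : 0 < f.natDegree)
    (hroot : ∀ x, (f.map (Int.castRingHom (ResidueField O))).eval x ≠ 0)
    (hD : X * derivative (f.map (Int.castRingHom (ResidueField O)))
        - C (f.natDegree : ResidueField O) * f.map (Int.castRingHom (ResidueField O)) ≠ 0)
    (t : O) (ht : residue O t = 0) :
    ∃ s z s' z' : O, s * aeval z f = z ^ f.natDegree ∧ s' * aeval z' f = z' ^ f.natDegree ∧
      s - s' = t := by
  set φ := f.map (Int.castRingHom (ResidueField O)) with hφ
  set n := f.natDegree with hndef
  have hne1 : X ^ n - φ ≠ 0 := by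
    intro h
    have := congrArg (eval 0) h
    simp [hn.ne'] at this
    exact hroot 0 this
  have hne : (X * derivative φ - C (n : ResidueField O) * φ) * (X ^ n - φ) * X ≠ 0 :=
    mul_ne_zero (mul_ne_zero hD hne1) X_ne_zero
  obtain ⟨y, hy⟩ : ∃ y, eval y ((X * derivative φ - C (n : ResidueField O) * φ) *
      (X ^ n - φ) * X) ≠ 0 := by
    by_contra! h
    exact hne (Polynomial.funext (fun r => by rw [h r, eval_zero]))
  obtain ⟨s', z', hz', hs', hres⟩ := exists_lift_val O f hroot y
  rw [← hφ, ← hndef] at hres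
  have hfy := hroot y
  rw [eq_div_iff hfy] at hres
  simp only [eval_mul, eval_sub, eval_pow, eval_X, eval_C, mul_ne_zero_iff] at hy
  obtain ⟨⟨hy1, hy2⟩, hy3⟩ := hy
  set σ := s' + t with hσ
  have hσr : residue O σ = residue O s' := by rw [hσ, map_add, ht, add_zero]
  -- the (non-monic) polynomial whose root we want
  set fO : O[X] := f.map (Int.castRingHom O) with hfO
  have hfOm : fO.Monic := hm.map _
  have hfOd : fO.natDegree = n := hm.natDegree_map _
  have hev : ∀ z : O, fO.eval z = aeval z f := by
    intro z
    rw [hfO, eval_map, aeval_def]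
    rfl
  have hres' : ∀ z : O, residue O (fO.derivative.eval z) = φ.derivative.eval (residue O z) := by
    intro z
    have := residue_aeval O (derivative f) z
    rw [hfO, hφ, derivative_map, derivative_map, ← this, eval_map, aeval_def]
    rfl
  have hu : IsUnit (1 - σ) := by
    rw [← residue_ne_zero_iff_isUnit, map_sub, map_one, hσr]
    intro h
    apply hy2
    linear_combination (-eval y φ) * h - hres
  obtain ⟨u, hu⟩ := hu
  have huinv : (u : O) * ((u⁻¹ : Oˣ) : O) = 1 := u.mul_inv
  set P : O[X] := X ^ n - C σ * fO with hP
  have hPn : P.coeff n = 1 - σ := by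
    have : fO.coeff n = 1 := by rw [← hfOd]; exact hfOm
    simp [hP, this]
  have hPd : P.natDegree ≤ n := by
    rw [natDegree_le_iff_coeff_eq_zero]
    intro i hi
    simp [hP, coeff_X_pow, hi.ne', coeff_eq_zero_of_natDegree_lt (hfOd ▸ hi)]
  have hQm : (C ((u⁻¹ : Oˣ) : O) * P).Monic := by
    apply monic_of_natDegree_le_of_coeff_eq_one n
    · exact (natDegree_C_mul_le _ _).trans hPd
    · rw [coeff_C_mul, hPn, ← hu, Units.inv_mul]
  obtain ⟨z, hz, -⟩ := HenselianLocalRing.is_henselian _ hQm z' (by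
      rw [eval_mul, eval_C]
      apply Ideal.mul_mem_left
      rw [← residue_eq_zero_iff, hP]
      simp only [eval_sub, eval_pow, eval_X, eval_mul, eval_C, hev, map_sub, map_mul, map_pow, hσr,
        residue_aeval, hz']
      rw [← hφ, hres, sub_self]) (by
      rw [derivative_C_mul, eval_mul, eval_C]
      apply (u⁻¹).isUnit.mul
      rw [← residue_ne_zero_iff_isUnit, hP]
      simp only [derivative_sub, derivative_X_pow, derivative_C_mul, eval_sub, eval_mul, eval_C,
        eval_pow, eval_X, map_sub, map_mul, map_pow, map_natCast, eval_natCast, hσr, hres', hz']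
      intro h
      apply hy1
      obtain ⟨m, hm⟩ : ∃ m, n = m + 1 := ⟨n - 1, by omega⟩
      have hs0 : residue O s' ≠ 0 := by
        intro h0
        rw [h0, zero_mul] at hres
        exact pow_ne_zero n hy3 hres.symm
      apply mul_left_cancel₀ hs0
      rw [hm] at h hres ⊢
      simp only [Nat.add_sub_cancel] at h
      linear_combination (-y) * h - ((m + 1 : ℕ) : ResidueField O) * hres)
  refine ⟨σ, z, s', z', ?_, hs', by rw [hσ]; ring⟩
  have hz2 : ((u⁻¹ : Oˣ) : O) * P.eval z = 0 := by
    simpa [IsRoot] using hz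
  have hz3 : P.eval z = 0 := by
    simpa using hz2
  rw [hP] at hz3
  simp only [eval_sub, eval_pow, eval_X, eval_mul, eval_C, hev] at hz3
  linear_combination -hz3

theorem exists_six [HenselianLocalRing O] (hPAC : IsPAC (ResidueField O)) (hm : f.Monic)
    (hn : 0 < f.natDegree)
    (hroot : ∀ x, (f.map (Int.castRingHom (ResidueField O))).eval x ≠ 0)
    (hD : X * derivative (f.map (Int.castRingHom (ResidueField O)))
        - C (f.natDegree : ResidueField O) * f.map (Int.castRingHom (ResidueField O)) ≠ 0)
    (x : O) :
    ∃ s z : Fin 6 → O, (∀ i, s i * aeval (z i) f = z i ^ f.natDegree) ∧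
      x = s 0 - s 1 + (s 2 - s 3) + (s 4 - s 5) := by
  have := pac_infinite hPAC
  obtain ⟨B, hB, hgood⟩ := exists_bad hPAC (f.map (Int.castRingHom (ResidueField O)))
    f.natDegree hn (hm.map _) (hm.natDegree_map _) hroot hD
  obtain ⟨c, hc⟩ : ∃ c, c ∉ B ∪ (fun b => residue O x - b) ⁻¹' B := by
    apply Set.Finite.exists_notMem
    exact hB.union (hB.preimage sub_right_injective.injOn)
  simp only [Set.mem_union, Set.mem_preimage, not_or] at hc
  obtain ⟨x1, z1, h1⟩ := hgood _ hc.1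
  obtain ⟨x2, z2, h2⟩ := hgood _ hc.2
  obtain ⟨s0, a0, -, e0, r0⟩ := exists_lift_val O f hroot z1
  obtain ⟨s1, a1, -, e1, r1⟩ := exists_lift_val O f hroot x1
  obtain ⟨s2, a2, -, e2, r2⟩ := exists_lift_val O f hroot z2
  obtain ⟨s3, a3, -, e3, r3⟩ := exists_lift_val O f hroot x2
  obtain ⟨s4, a4, s5, a5, e4, e5, h⟩ := hensel_part O f hm hn hroot hD
    (x - (s0 - s1 + (s2 - s3))) (by
      simp only [map_sub, map_add, r0, r1, r2, r3, ← h1, ← h2]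
      ring)
  refine ⟨![s0, s1, s2, s3, s4, s5], ![a0, a1, a2, a3, a4, a5], ?_, ?_⟩
  · intro i
    fin_cases i <;> simpa
  · show x = s0 - s1 + (s2 - s3) + (s4 - s5)
    rw [h]
    ring

end ValPart

section FormulaPart

open Polynomial

theorem exists_formula (K : Type*) [Field K] (f : ℤ[X]) :
    ∃ (n : ℕ) (ψ : Language.ring.BoundedFormula (Fin 1) n), ψ.IsQF ∧
      ∀ x : K, ψ.exs.Realize (fun _ => x) ↔
        ∃ s z : Fin 6 → K, (∀ i, s i * aeval (z i) f = z i ^ f.natDegree) ∧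
          x = s 0 - s 1 + (s 2 - s 3) + (s 4 - s 5) := by
  let S : Fin 6 → FreeCommRing (Fin 1 ⊕ Fin 12) := fun i =>
    FreeCommRing.of (Sum.inr (Fin.castAdd 6 i))
  let Z : Fin 6 → FreeCommRing (Fin 1 ⊕ Fin 12) := fun i =>
    FreeCommRing.of (Sum.inr (Fin.natAdd 6 i))
  let E : Fin 6 → Language.ring.BoundedFormula (Fin 1) 12 := fun i =>
    (Ring.termOfFreeCommRing (S i * aeval (Z i) f)).bdEqual
      (Ring.termOfFreeCommRing (Z i ^ f.natDegree))
  let M : Language.ring.BoundedFormula (Fin 1) 12 :=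
    (Ring.termOfFreeCommRing (FreeCommRing.of (Sum.inl 0))).bdEqual
      (Ring.termOfFreeCommRing (S 0 - S 1 + (S 2 - S 3) + (S 4 - S 5)))
  have hE : ∀ i, (E i).IsQF := fun i => (BoundedFormula.IsAtomic.equal _ _).isQF
  have hM : M.IsQF := (BoundedFormula.IsAtomic.equal _ _).isQF
  refine ⟨12, E 0 ⊓ (E 1 ⊓ (E 2 ⊓ (E 3 ⊓ (E 4 ⊓ (E 5 ⊓ M))))),
    (hE 0).inf ((hE 1).inf ((hE 2).inf ((hE 3).inf ((hE 4).inf ((hE 5).inf hM))))), ?_⟩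
  intro x
  have hev : ∀ (v : Fin 12 → K) (i : Fin 6),
      FreeCommRing.lift (Sum.elim (fun _ => x) v) (aeval (Z i) f) =
        aeval (v (Fin.natAdd 6 i)) f := by
    intro v i
    rw [aeval_def, hom_eval₂, aeval_def]
    simp only [Z, FreeCommRing.lift_of, Sum.elim_inr]
    congr 1
    exact RingHom.ext_int _ _
  have hEi : ∀ (v : Fin 12 → K) (i : Fin 6), (E i).Realize (fun _ => x) v ↔
      v (Fin.castAdd 6 i) * aeval (v (Fin.natAdd 6 i)) f
        = v (Fin.natAdd 6 i) ^ f.natDegree := by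
    intro v i
    simp only [E, BoundedFormula.realize_bdEqual, Ring.realize_termOfFreeCommRing, map_mul,
      map_pow, hev]
    simp only [S, Z, FreeCommRing.lift_of, Sum.elim_inr]
  have hMi : ∀ (v : Fin 12 → K), M.Realize (fun _ => x) v ↔
      x = v (Fin.castAdd 6 0) - v (Fin.castAdd 6 1) + (v (Fin.castAdd 6 2) - v (Fin.castAdd 6 3))
        + (v (Fin.castAdd 6 4) - v (Fin.castAdd 6 5)) := by
    intro v
    simp only [M, BoundedFormula.realize_bdEqual, Ring.realize_termOfFreeCommRing, map_add,
      map_sub]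
    simp only [S, FreeCommRing.lift_of, Sum.elim_inr, Sum.elim_inl]
  rw [BoundedFormula.realize_exs]
  simp only [BoundedFormula.realize_inf, hEi, hMi]
  constructor
  · rintro ⟨v, h0, h1, h2, h3, h4, h5, h6⟩
    refine ⟨fun i => v (Fin.castAdd 6 i), fun i => v (Fin.natAdd 6 i), ?_, h6⟩
    intro i
    fin_cases i
    exacts [h0, h1, h2, h3, h4, h5]
  · rintro ⟨s, z, h, hx⟩
    refine ⟨Fin.append s z, ?_⟩
    simp only [Fin.append_left, Fin.append_right]
    exact ⟨h 0, h 1, h 2, h 3, h 4, h 5, hx⟩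

end FormulaPart

/-- If `K` is a henselian valued field with valuation ring `O` whose
residue field `F` is pseudo-algebraically closed and the relative algebraic closure of
the prime field in `F` is not algebraically closed, then `O` is defined in `K` by a
parameter-free existential formula in the language of rings. -/
theorem statement15 (K : Type*) [Field K] (O : ValuationSubring K) [HenselianLocalRing O]
    (hPAC : IsPAC (IsLocalRing.ResidueField O))
    (halg : ¬ IsAlgClosed (algebraicClosure (⊥ : Subfield (IsLocalRing.ResidueField O))
      (IsLocalRing.ResidueField O))) :
    ∃ (n : ℕ) (ψ : Language.ring.BoundedFormula (Fin 1) n), ψ.IsQF ∧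
      ∀ x : K, ψ.exs.Realize (fun _ => x) ↔ x ∈ O := by
  obtain ⟨f, hm, hn, hroot, hD⟩ := exists_poly _ halg
  obtain ⟨n, ψ, hψ, h⟩ := exists_formula K f
  refine ⟨n, ψ, hψ, fun x => (h x).trans ⟨?_, fun hx => ?_⟩⟩
  · rintro ⟨s, z, hs, rfl⟩
    have hmem := fun i => mem_of_eq O f hm hroot (s i) (z i) (hs i)
    exact O.add_mem _ _ (O.add_mem _ _ (sub_mem (hmem 0) (hmem 1)) (sub_mem (hmem 2) (hmem 3)))
      (sub_mem (hmem 4) (hmem 5))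
  · obtain ⟨s, z, hs, hx'⟩ := exists_six O f hPAC hm hn hroot hD ⟨x, hx⟩
    refine ⟨fun i => s i, fun i => z i, fun i => ?_, congrArg Subtype.val hx'⟩
    rw [← coe_aeval]
    exact congrArg Subtype.val (hs i)
end
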